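/- arXiv:1704.06782 — 2 statements merged into one kernel-verified Lean document; each statement's English description precedes it below -/
import Mathlib

section
/- Let W = L ∪ S be a compactification of the ray with ray part L and remainder S, and let f : Y → W be a continuous surjection from a continuum Y onto W. Then there exists an increasing sequence A₁ ⊆ A₂ ⊆ … of subcontinua of Y, each contained in f⁻¹(L), such that f restricted to the closure A of the union of the A_i maps A onto W. -/
/-!
The preimages `K n` of the initial segments `[0, n]` of the ray are compact and increasing. Fix `x`
over the endpoint `0` and let `A n` be the component of `x` in `K n`. By boundary bumping
(`exists_mem_connectedComponentIn_diff`) `A n` meets the fibre over `n`, so the connected set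
`f '' A n` contains both `0` and `n`, hence the whole segment `[0, n]`. Thus the image of the closure
of `⋃ n, A n` is a compact set containing the dense set `L`.
-/

open Set Topology TopologicalSpace

universe u v

/-- A continuum: a nonempty compact connected metrizable topological space. -/
def IsContinuum (X : Type u) [TopologicalSpace X] : Prop :=
  Nonempty X ∧ CompactSpace X ∧ ConnectedSpace X ∧ MetrizableSpace X

/-- A subcontinuum of a space: a nonempty compact connected subset. -/
def IsSubcontinuum {X : Type u} [TopologicalSpace X] (S : Set X) : Prop :=
  IsCompact S ∧ IsConnected S

/-- The subset `S` is indecomposable: it is not the union of two proper subcontinua. -/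
def IsIndecomposableSet {X : Type u} [TopologicalSpace X] (S : Set X) : Prop :=
  ¬ ∃ A B : Set X, IsSubcontinuum A ∧ IsSubcontinuum B ∧
      A ⊆ S ∧ B ⊆ S ∧ A ≠ S ∧ B ≠ S ∧ A ∪ B = S

/-- An indecomposable space. -/
def IsIndecomposable (X : Type u) [TopologicalSpace X] : Prop :=
  IsIndecomposableSet (Set.univ : Set X)

/-- A hereditarily indecomposable space: every subcontinuum is indecomposable. -/
def HereditarilyIndecomposable (X : Type u) [TopologicalSpace X] : Prop :=
  ∀ S : Set X, IsSubcontinuum S → IsIndecomposableSet S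

/-- Covering dimension `≤ n`: every finite open cover admits a finite open refinement
in which every point lies in at most `n + 1` members. -/
def CovDimLE (X : Type u) [TopologicalSpace X] (n : ℕ) : Prop :=
  ∀ (ι : Type) (U : ι → Set X), Finite ι → (∀ i, IsOpen (U i)) → (⋃ i, U i) = Set.univ →
    ∃ (κ : Type) (V : κ → Set X), Finite κ ∧ (∀ j, IsOpen (V j)) ∧ (⋃ j, V j) = Set.univ ∧
      (∀ j, ∃ i, V j ⊆ U i) ∧ ∀ x : X, Nat.card {j : κ // x ∈ V j} ≤ n + 1

/-- Covering dimension `≤ m` for an integer `m`; for `m < 0` this means the space is empty. -/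
def CovDimLEInt (X : Type u) [TopologicalSpace X] (m : ℤ) : Prop :=
  (0 ≤ m ∧ CovDimLE X m.toNat) ∨ (m < 0 ∧ IsEmpty X)

/-- Covering dimension equal to `n`: `dim X ≤ n` but not `dim X ≤ n - 1`. -/
def CovDimEq (X : Type u) [TopologicalSpace X] (n : ℕ) : Prop :=
  CovDimLE X n ∧ ¬ CovDimLEInt X ((n : ℤ) - 1)

/-- An infinite-dimensional space: `dim X ≤ n` holds for no natural number `n`. -/
def InfiniteDimensional (X : Type u) [TopologicalSpace X] : Prop :=
  ∀ n : ℕ, ¬ CovDimLE X n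

/-- An `n`-dimensional Cantor manifold: a compact metrizable space with `dim X = n` such that
no closed subset `L` with `dim L ≤ n - 2` disconnects `X`, i.e. `X ∖ L` is connected. -/
def IsCantorManifold (X : Type u) [TopologicalSpace X] (n : ℕ) : Prop :=
  CompactSpace X ∧ MetrizableSpace X ∧ CovDimEq X n ∧
    ∀ L : Set X, IsClosed L → CovDimLEInt (↥L) ((n : ℤ) - 2) → IsConnected (Lᶜ : Set X)

/-- `L` is a partition between `A` and `B`: a closed set whose complement is the union of two
disjoint open sets containing `A` and `B` respectively. -/
def IsPartitionBetween {X : Type u} [TopologicalSpace X] (L A B : Set X) : Prop :=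
  IsClosed L ∧ ∃ U V : Set X, IsOpen U ∧ IsOpen V ∧ A ⊆ U ∧ B ⊆ V ∧ Disjoint U V ∧
    Lᶜ = U ∪ V

/-- A strongly infinite-dimensional space. -/
def StronglyInfiniteDimensional (X : Type u) [TopologicalSpace X] : Prop :=
  ∃ A B : ℕ → Set X,
    (∀ i, IsClosed (A i) ∧ IsClosed (B i) ∧ Disjoint (A i) (B i)) ∧
    ∀ L : ℕ → Set X, (∀ i, IsPartitionBetween (L i) (A i) (B i)) → (⋂ i, L i).Nonempty

/-- A hereditarily strongly infinite-dimensional space: every subspace is either of covering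
dimension `≤ 0` or strongly infinite-dimensional. -/
def HereditarilyStronglyInfiniteDimensional (X : Type u) [TopologicalSpace X] : Prop :=
  ∀ S : Set X, CovDimLE (↥S) 0 ∨ StronglyInfiniteDimensional (↥S)

/-- An infinite-dimensional Cantor manifold: an infinite-dimensional continuum such that every
closed subset disconnecting it is infinite-dimensional. -/
def IsInfiniteDimensionalCantorManifold (X : Type u) [TopologicalSpace X] : Prop :=
  IsContinuum X ∧ InfiniteDimensional X ∧
    ∀ L : Set X, IsClosed L → ¬ IsConnected (Lᶜ : Set X) → InfiniteDimensional (↥L)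

/-- A hereditarily strongly infinite-dimensional Cantor manifold. -/
def IsHSIDCantorManifold (X : Type u) [TopologicalSpace X] : Prop :=
  IsInfiniteDimensionalCantorManifold X ∧ HereditarilyStronglyInfiniteDimensional X

/-- A terminal subcontinuum: a subcontinuum `Y` such that every subcontinuum meeting both `Y`
and its complement contains `Y`. -/
def IsTerminalSubcontinuum {X : Type u} [TopologicalSpace X] (Y : Set X) : Prop :=
  IsSubcontinuum Y ∧
    ∀ Z : Set X, IsSubcontinuum Z → (Z ∩ Y).Nonempty → (Z \ Y).Nonempty → Y ⊆ Z

/-- An atomic map: a continuous map all of whose fibers are terminal subcontinua. -/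
def IsAtomicMap {M : Type u} {X : Type v} [TopologicalSpace M] [TopologicalSpace X]
    (p : M → X) : Prop :=
  Continuous p ∧ ∀ x : X, IsTerminalSubcontinuum (p ⁻¹' ({x} : Set X))

/-- A strongly chaotic space: for any two disjoint subsets `U`, `V` with `U` nonempty open,
there is no homeomorphism of `U` onto `V`. -/
def StronglyChaotic (X : Type u) [TopologicalSpace X] : Prop :=
  ∀ U V : Set X, Disjoint U V → U.Nonempty → IsOpen U → IsEmpty (↥U ≃ₜ ↥V)

/-- `Y` embeds in `Z`: there is a homeomorphism of `Y` onto a subspace of `Z`. -/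
def EmbedsIn (Y : Type u) (Z : Type v) [TopologicalSpace Y] [TopologicalSpace Z] : Prop :=
  ∃ f : Y → Z, Topology.IsEmbedding f

/-- `p : M → X` exhibits `M` as a pseudosuspension of `A` over `X` at `a`: `M` is a continuum,
`p` is an atomic surjection, `p ⁻¹ (a)` is homeomorphic to `A`, and `p` restricted to
`p ⁻¹ (X ∖ {a})` is a homeomorphism onto `X ∖ {a}`. -/
def IsPseudosuspension {X : Type u} {M : Type v} [TopologicalSpace X] [TopologicalSpace M]
    (A : Type w) [TopologicalSpace A] (a : X) (p : M → X) : Prop :=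
  IsContinuum M ∧ Function.Surjective p ∧ IsAtomicMap p ∧
    Nonempty (↥(p ⁻¹' ({a} : Set X)) ≃ₜ A) ∧
    IsHomeomorph (Set.restrictPreimage ({a}ᶜ : Set X) p)

/-- A weakly confluent map: every subcontinuum of the codomain is the image of some
subcontinuum of the domain. -/
def WeaklyConfluent {X : Type u} {Y : Type v} [TopologicalSpace X] [TopologicalSpace Y]
    (f : X → Y) : Prop :=
  ∀ B : Set Y, IsSubcontinuum B → ∃ A : Set X, IsSubcontinuum A ∧ f '' A = B

/-- `W` is a compactification of the ray with ray part `L`: `W` is compact metrizable and `L`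
is a dense open subset homeomorphic to the half-line `[0, ∞)`. -/
def IsRayCompactification (W : Type u) [TopologicalSpace W] (L : Set W) : Prop :=
  CompactSpace W ∧ MetrizableSpace W ∧ IsOpen L ∧ Dense L ∧
    Nonempty (↥L ≃ₜ ↥(Set.Ici (0 : ℝ)))

/-- A countable-dimensional space: the union of countably many finite-dimensional subspaces. -/
def CountableDimensional (X : Type u) [TopologicalSpace X] : Prop :=
  ∃ S : ℕ → Set X, (⋃ i, S i) = Set.univ ∧ ∀ i, ∃ n : ℕ, CovDimLE (↥(S i)) n

/-- Small transfinite inductive dimension `ind X ≤ α`. -/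
def IndLE (α : Ordinal.{u}) (X : Type u) [TopologicalSpace X] : Prop :=
  ∀ (x : X) (V : Set X), IsOpen V → x ∈ V →
    ∃ U : Set X, IsOpen U ∧ x ∈ U ∧ U ⊆ V ∧
      ∃ β : Ordinal.{u}, ∃ _ : β < α, IndLE β (↥(frontier U))
termination_by α

/-- Small transfinite inductive dimension `ind X = α`. -/
def IndEq (α : Ordinal.{u}) (X : Type u) [TopologicalSpace X] : Prop :=
  IndLE α X ∧ ∀ β : Ordinal.{u}, β < α → ¬ IndLE β X

/-- A bundled topological space. -/
structure TopSpace : Type 1 where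
  carrier : Type
  [topology : TopologicalSpace carrier]

attribute [instance] TopSpace.topology

instance : CoeSort TopSpace Type := ⟨TopSpace.carrier⟩

/-- Boundary bumping: in a connected compact Hausdorff space, a component of a closed set `K` is not
contained in any open set `O ⊆ K` other than the whole space. -/
theorem exists_mem_connectedComponentIn_diff {Y : Type v} [TopologicalSpace Y] [CompactSpace Y]
    [T2Space Y] [PreconnectedSpace Y] {K O : Set Y} (hK : IsClosed K) (hO : IsOpen O)
    (hOK : O ⊆ K) (hne : O ≠ Set.univ) {x : Y} (hx : x ∈ K) :
    ∃ y ∈ connectedComponentIn K x, y ∉ O := by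
  by_contra! hcon
  have : CompactSpace K := isCompact_iff_compactSpace.mp hK.isCompact
  set U : Set K := Subtype.val ⁻¹' O with hU
  have hUo : IsOpen U := hO.preimage continuous_subtype_val
  have hsub : connectedComponent (⟨x, hx⟩ : K) ⊆ U := by
    intro y hy
    apply hcon
    rw [connectedComponentIn_eq_image hx]
    exact ⟨y, hy, rfl⟩
  -- The component is the intersection of its clopen neighbourhoods, so one of them lies in `U`.
  obtain ⟨D, hD, hxD, hDU⟩ : ∃ D : Set K, IsClopen D ∧ (⟨x, hx⟩ : K) ∈ D ∧ D ⊆ U := by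
    rw [connectedComponent_eq_iInter_isClopen] at hsub
    have : Nonempty { s : Set K // IsClopen s ∧ (⟨x, hx⟩ : K) ∈ s } :=
      ⟨⟨Set.univ, isClopen_univ, mem_univ _⟩⟩
    have hdir : Directed (· ⊇ ·)
        (fun s : { s : Set K // IsClopen s ∧ (⟨x, hx⟩ : K) ∈ s } => s.1) := by
      rintro ⟨s, hs, hxs⟩ ⟨t, ht, hxt⟩
      exact ⟨⟨s ∩ t, hs.inter ht, hxs, hxt⟩, inter_subset_left, inter_subset_right⟩
    obtain ⟨⟨D, hD, hxD⟩, hDU⟩ := exists_subset_nhds_of_compactSpace hdir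
      (fun s => s.2.1.isClosed) (fun y hy => hUo.mem_nhds (hsub hy))
    exact ⟨D, hD, hxD, hDU⟩
  -- Being contained in `O`, the set `D` is clopen in the whole space, hence everything.
  have hcl : IsClosed (Subtype.val '' D) := hK.isClosedMap_subtype_val _ hD.isClosed
  have hop : IsOpen (Subtype.val '' D) := by
    obtain ⟨V, hV, hVD⟩ := isOpen_induced_iff.mp hD.isOpen
    have : Subtype.val '' D = V ∩ O := by
      ext y
      constructor
      · rintro ⟨z, hz, rfl⟩
        exact ⟨by rw [← hVD] at hz; exact hz, hDU hz⟩
      · rintro ⟨hyV, hyO⟩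
        exact ⟨⟨y, hOK hyO⟩, by rw [← hVD]; exact hyV, rfl⟩
    rw [this]
    exact hV.inter hO
  have huniv : Subtype.val '' D = Set.univ :=
    IsClopen.eq_univ ⟨hcl, hop⟩ ⟨x, ⟨x, hx⟩, hxD, rfl⟩
  apply hne
  rw [eq_univ_iff_forall]
  intro y
  obtain ⟨z, hz, rfl⟩ : y ∈ Subtype.val '' D := huniv ▸ mem_univ y
  exact hDU hz

theorem stmt_14 {W : Type u} [TopologicalSpace W] (L : Set W)
    (hW : IsRayCompactification W L)
    {Y : Type v} [TopologicalSpace Y] (hY : IsContinuum Y)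
    (f : Y → W) (hf : Continuous f) (hfsurj : Function.Surjective f) :
    ∃ A : ℕ → Set Y, Monotone A ∧ (∀ i, IsSubcontinuum (A i)) ∧
      (∀ i, A i ⊆ f ⁻¹' L) ∧ f '' closure (⋃ i, A i) = Set.univ := by
  obtain ⟨_, hWm, hLo, hLd, ⟨h⟩⟩ := hW
  obtain ⟨_, _, _, _⟩ := hY
  have : T2Space W := by
    let := metrizableSpaceMetric W
    infer_instance
  have : T2Space Y := by
    let := metrizableSpaceMetric Y
    infer_instance
  let e : Set.Ici (0 : ℝ) → W := fun t => (h.symm t : W)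
  have he : IsOpenEmbedding e := hLo.isOpenEmbedding_subtypeVal.comp h.symm.isOpenEmbedding
  have heL : ∀ t, e t ∈ L := fun t => (h.symm t).2
  let c : ℕ → Set.Ici (0 : ℝ) := fun n => ⟨n, Set.mem_Ici.mpr (Nat.cast_nonneg n)⟩
  let z : Set.Ici (0 : ℝ) := ⟨0, le_refl (0 : ℝ)⟩
  have hz : ∀ t, z ≤ t := fun t => t.2
  let K : ℕ → Set Y := fun n => f ⁻¹' (e '' Iic (c n))
  have hK : ∀ n, IsClosed (K n) := fun n => by
    have hc : IsCompact (Iic (c n)) := by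
      have : Iic (c n) = Subtype.val ⁻¹' Icc (0 : ℝ) n := by
        ext t
        exact ⟨fun ht => ⟨t.2, ht⟩, fun ht => ht.2⟩
      rw [this]
      exact isClosed_Ici.isClosedEmbedding_subtypeVal.isCompact_preimage isCompact_Icc
    exact (hc.image he.continuous).isClosed.preimage hf
  obtain ⟨x, hx⟩ := hfsurj (e z)
  have hxK : ∀ n, x ∈ K n := fun n => ⟨z, hz _, hx.symm⟩
  have hseg : ∀ n, e '' Iic (c n) ⊆ f '' connectedComponentIn (K n) x := by
    intro n
    obtain ⟨y, hyA, hy⟩ := exists_mem_connectedComponentIn_diff (O := f ⁻¹' (e '' Iio (c n)))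
      (hK n) ((he.isOpenMap _ isOpen_Iio).preimage hf)
      (preimage_mono (image_mono Iio_subset_Iic_self))
      (by
        intro hu
        obtain ⟨y, hy⟩ := hfsurj (e (c n))
        have : y ∈ f ⁻¹' (e '' Iio (c n)) := hu ▸ mem_univ y
        obtain ⟨t, ht, hty⟩ := this
        rw [hy] at hty
        exact lt_irrefl _ (he.injective hty ▸ ht : c n < c n)) (hxK n)
    obtain ⟨t, ht, hty⟩ := connectedComponentIn_subset _ _ hyA
    have htn : t = c n := by
      by_contra hne
      exact hy ⟨t, lt_of_le_of_ne ht hne, hty⟩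
    subst htn
    set B := f '' connectedComponentIn (K n) x with hB
    have hBr : B ⊆ range e := by
      rintro _ ⟨w, hw, rfl⟩
      exact image_subset_range _ _ (connectedComponentIn_subset (K n) x hw)
    have hpre : IsPreconnected (e ⁻¹' B) := by
      rw [← he.isInducing.isPreconnected_image, image_preimage_eq_of_subset hBr]
      exact isPreconnected_connectedComponentIn.image _ hf.continuousOn
    rintro _ ⟨s, hs, rfl⟩
    have h0 : z ∈ e ⁻¹' B := ⟨x, mem_connectedComponentIn (hxK n), hx⟩
    have h1 : c n ∈ e ⁻¹' B := ⟨y, hyA, hty.symm⟩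
    exact hpre.ordConnected.out h0 h1 ⟨hz s, hs⟩
  refine ⟨fun n => connectedComponentIn (K n) x, ?_, ?_, ?_, ?_⟩
  · intro m n hmn
    refine connectedComponentIn_mono x (preimage_mono (image_mono (Iic_subset_Iic.mpr ?_)))
    exact (Nat.cast_le.mpr hmn : (m : ℝ) ≤ n)
  · intro n
    refine ⟨?_, isConnected_connectedComponentIn_iff.mpr (hxK n)⟩
    change IsCompact (connectedComponentIn (K n) x)
    rw [connectedComponentIn_eq_image (hxK n)]
    exact ((hK n).isClosedMap_subtype_val _ isClosed_connectedComponent).isCompact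
  · intro n y hy
    obtain ⟨t, -, ht⟩ := connectedComponentIn_subset _ _ hy
    rw [mem_preimage, ← ht]
    exact heL t
  · have hcl : IsClosed (f '' closure (⋃ n, connectedComponentIn (K n) x)) :=
      (isClosed_closure.isCompact.image hf).isClosed
    refine (hLd.mono ?_).closure_eq ▸ hcl.closure_eq.symm
    intro w hw
    obtain ⟨n, hn⟩ := exists_nat_ge (h ⟨w, hw⟩ : ℝ)
    have hwn : w ∈ e '' Iic (c n) := ⟨h ⟨w, hw⟩, hn, by simp [e]⟩
    exact image_mono ((subset_iUnion _ n).trans subset_closure) (hseg n hwn)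
end

section
/- For every continuum W and every hereditarily indecomposable continuum Z of covering dimension at least 2 (i.e., dim Z ≤ 1 fails), there exists a subcontinuum Y of Z admitting a continuous surjection onto W. -/
/-!
Suppose that no subcontinuum of `Z` maps onto `W`. It is to be shown that `dim Z ≤ 1`.

Fix `ε > 0`. Since `Z` is hereditarily indecomposable, a level of a Whitney map on the hyperspace of
subcontinua is a continuous decomposition of `Z` into nontrivial subcontinua of diameter at most `ε`
(`exists_decomposition`); let `π : Z → X` be the quotient map, which is open with connected fibers.

The main point is a function `u : Z → ℝ` that is nonconstant on every fiber of `π`. Given such a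
function, let `A` be the set of points at which `u` is at most the middle of its range on the fiber
through the point, and `B` the set where it is at least that. These closed sets cover `Z` and
contain no fiber. As a component of `A` is comparable with every fiber that it meets, it lies in a
fiber, and likewise for `B`. Splitting `A` and `B` into small disjoint relatively clopen pieces and
thickening these gives a cover of order two (`covDimLE_one`).

To find `u`, note first that `W` is an image of a continuum `K` in `ℝ⁴` (`exists_continuum_map`).
By assumption no continuum in `X` is mapped onto `K`, or a scaled copy of it, by a map `X → ℝ⁴`. In
this situation, following Mazurkiewicz, the components of the preimage of `K` can be pushed off a
common point of `K` (`exists_omitting`), so every map `X → ℝ⁴` is a uniform limit of maps without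
zeros (`exists_nowhere_zero`). Now let `u` be nonconstant on the fibers over a closed set `P`, and
`g` on the fibers over a closed set `D`. Consider `u + ∑ cₖ g ^ (k + 1)` with four coefficients
depending on the fiber. Over `D`, at most one choice of coefficients is bad for a given fiber, and
the bad choices form a map from a closed set of `X` to `ℝ⁴`; extend it to `c` on `X` and take a map
`c'` without zeros near `c`. The coefficients `c - c'` are never bad over `D`, and are so small that
they do no harm over `P` (`exists_nonconstOn_union`). Finitely many such steps, with distance
functions as `g`, give a function that is nonconstant on all fibers (`exists_nonconstOn`).
-/

open Set Topology TopologicalSpace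

universe u v

/-! ### Clopen splittings of compact sets -/

/-- If every component of a closed subset `T` of a compact Hausdorff space lies in some member of
a family of open sets, then `T` is covered by finitely many disjoint open sets, each inside a
member of the family. -/
lemma exists_disjoint_open_cover {Z ι : Type*} [TopologicalSpace Z] [CompactSpace Z] [T2Space Z]
    {T : Set Z} (hT : IsClosed T) {U : ι → Set Z} (hU : ∀ i, IsOpen (U i))
    (h : ∀ x ∈ T, ∃ i, connectedComponentIn T x ⊆ U i) :
    ∃ (n : ℕ) (V : Fin n → Set Z), (∀ j, IsOpen (V j)) ∧ Pairwise (Function.onFun Disjoint V) ∧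
      T ⊆ ⋃ j, V j ∧ ∀ j, ∃ i, V j ⊆ U i := by
  classical
  have : CompactSpace T := isCompact_iff_compactSpace.mp hT.isCompact
  have key : ∀ x : T, ∃ C : Set T, IsClopen C ∧ x ∈ C ∧ ∃ i, C ⊆ (↑) ⁻¹' U i := by
    intro x
    obtain ⟨i, hi⟩ := h x x.2
    rw [connectedComponentIn_eq_image x.2] at hi
    have hi' : connectedComponent x ⊆ (↑) ⁻¹' U i := image_subset_iff.mp hi
    rw [connectedComponent_eq_iInter_isClopen] at hi'
    have : Nonempty { s : Set T // IsClopen s ∧ x ∈ s } := ⟨⟨univ, isClopen_univ, mem_univ x⟩⟩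
    have := exists_subset_nhds_of_isCompact'
      (V := fun s : { s : Set T // IsClopen s ∧ x ∈ s } => (s : Set T))
      (by
        intro a b
        exact ⟨⟨a.1 ∩ b.1, a.2.1.inter b.2.1, a.2.2, b.2.2⟩, inter_subset_left,
          inter_subset_right⟩)
      (fun s => s.2.1.isClosed.isCompact) (fun s => s.2.1.isClosed)
      (U := (↑) ⁻¹' U i)
      (fun y hy => ((hU i).preimage continuous_subtype_val).mem_nhds (hi' hy))
    obtain ⟨s, hs⟩ := this
    exact ⟨s, s.2.1, s.2.2, i, hs⟩
  choose C hC hxC iC hiC using key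
  obtain ⟨t, ht⟩ := isCompact_univ.elim_nhds_subcover C
    (fun x _ => (hC x).isOpen.mem_nhds (hxC x))
  have ht' := ht.2
  let e := t.equivFin
  set n := t.card
  let B : ℕ → Set T := fun k => if hk : k < n then C (e.symm ⟨k, hk⟩) else ∅
  have hB : ∀ k, IsClopen (B k) := by
    intro k
    by_cases hk : k < n
    · simp only [B, hk, dif_pos]; exact hC _
    · simp only [B, hk]; exact isClopen_empty
  have hex : ∀ x : T, ∃ k, x ∈ B k := by
    intro x
    obtain ⟨y, hy, hxy⟩ := mem_iUnion₂.mp (ht' (mem_univ x))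
    refine ⟨e ⟨y, hy⟩, ?_⟩
    simp only [B, Fin.is_lt, dif_pos, Fin.eta, Equiv.symm_apply_apply]
    exact hxy
  have hdisj : ∀ k, IsClopen (disjointed B k) := fun k =>
    disjointedRec (fun _ i ht => ht.diff (hB i)) (hB k)
  -- the index of the first clopen set of the finite subcover containing a given point
  let idx : T → ℕ := fun x => Nat.find (hex x)
  have hidx : ∀ x k, idx x = k ↔ x ∈ disjointed B k := by
    intro x k
    simp only [idx, Nat.find_eq_iff, disjointed_eq_inter_compl, mem_inter_iff, mem_iInter,
      mem_compl_iff]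
  have hidxc : Continuous (fun x => (idx x : ℝ)) := by
    have : IsLocallyConstant idx := by
      rw [IsLocallyConstant.iff_isOpen_fiber]
      intro k
      have : idx ⁻¹' {k} = disjointed B k := by ext x; simp [hidx]
      rw [this]; exact (hdisj k).isOpen
    exact continuous_of_discreteTopology.comp this.continuous
  obtain ⟨g, hg⟩ := ContinuousMap.exists_restrict_eq hT (⟨_, hidxc⟩ : C(T, ℝ))
  have hg' : ∀ x : T, g x = idx x := fun x => by
    have := congrArg (fun F : C(T, ℝ) => F x) hg
    simpa using this
  refine ⟨n, fun j => g ⁻¹' Metric.ball (j : ℝ) (1 / 2) ∩ U (iC (e.symm j)), fun j =>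
    (Metric.isOpen_ball.preimage g.continuous).inter (hU _), ?_, ?_, fun j => ⟨_, inter_subset_right⟩⟩
  · intro j k hjk
    rw [Function.onFun, Set.disjoint_left]
    rintro z ⟨hz, -⟩ ⟨hz', -⟩
    simp only [mem_preimage, Metric.mem_ball, Real.dist_eq, abs_lt] at hz hz'
    apply hjk
    have h1 : ((j : ℕ) : ℝ) < (k : ℕ) + 1 := by linarith
    have h2 : ((k : ℕ) : ℝ) < (j : ℕ) + 1 := by linarith
    norm_cast at h1 h2
    ext; omega
  · intro z hz
    have hm : (⟨z, hz⟩ : T) ∈ B (idx ⟨z, hz⟩) := Nat.find_spec (hex ⟨z, hz⟩)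
    have hlt : idx ⟨z, hz⟩ < n := by
      by_contra hcon
      simp [B, hcon] at hm
    refine mem_iUnion.mpr ⟨⟨idx ⟨z, hz⟩, hlt⟩, ?_, ?_⟩
    · rw [mem_preimage, hg' ⟨z, hz⟩]
      simp
    · simp only [B, hlt, dif_pos] at hm
      exact hiC _ hm

/-! ### Whitney levels of hereditarily indecomposable continua -/

/-- Intersecting subcontinua of a hereditarily indecomposable space are comparable, since otherwise
their union would be decomposable. -/
lemma HereditarilyIndecomposable.nested {Z : Type*} [TopologicalSpace Z]
    (hZ : HereditarilyIndecomposable Z) {A B : Set Z} (hA : IsSubcontinuum A)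
    (hB : IsSubcontinuum B) (hAB : (A ∩ B).Nonempty) : A ⊆ B ∨ B ⊆ A := by
  by_contra hcon
  rw [not_or] at hcon
  refine hZ (A ∪ B) ⟨hA.1.union hB.1, hA.2.union hAB hB.2⟩ ⟨A, B, hA, hB, subset_union_left,
    subset_union_right, fun h => hcon.2 ?_, fun h => hcon.1 ?_, rfl⟩
  · rw [h]; exact subset_union_right
  · rw [h]; exact subset_union_left

lemma isClosed_connectedComponentIn {Z : Type*} [TopologicalSpace Z] {N : Set Z}
    (hN : IsClosed N) (x : Z) : IsClosed (connectedComponentIn N x) := by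
  by_cases hx : x ∈ N
  · exact isClosed_of_closure_subset (isPreconnected_connectedComponentIn.closure
      |>.subset_connectedComponentIn (subset_closure (mem_connectedComponentIn hx))
        (closure_minimal (connectedComponentIn_subset N x) hN))
  · rw [connectedComponentIn_eq_empty hx]; exact isClosed_empty

/-- A form of the boundary bumping theorem: there is a continuum strictly between any two nested
distinct continua, namely the component containing `D` of the trace on `L` of a small closed
neighborhood of `D`. -/
lemma exists_continuum_between {Z : Type*} [TopologicalSpace Z] [CompactSpace Z] [T2Space Z]
    {D L : Set Z} (hD : IsClosed D) (hDc : IsConnected D) (hL : IsClosed L)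
    (hLc : IsPreconnected L) (hDL : D ⊂ L) :
    ∃ C : Set Z, IsClosed C ∧ IsConnected C ∧ D ⊂ C ∧ C ⊂ L := by
  obtain ⟨y, hyL, hyD⟩ := exists_of_ssubset hDL
  obtain ⟨x, hx⟩ := hDc.nonempty
  obtain ⟨O, hO, hDO, hyO⟩ := normal_exists_closure_subset hD
    (isClosed_singleton (x := y)).isOpen_compl (by rwa [subset_compl_singleton_iff])
  set N := closure O ∩ L
  have hN : IsClosed N := isClosed_closure.inter hL
  have hDN : D ⊆ N := subset_inter (hDO.trans subset_closure) hDL.subset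
  have hxN : x ∈ N := hDN hx
  have hDC : D ⊆ connectedComponentIn N x := hDc.isPreconnected.subset_connectedComponentIn hx hDN
  have hCN := connectedComponentIn_subset N x
  refine ⟨connectedComponentIn N x, isClosed_connectedComponentIn hN x,
    isConnected_connectedComponentIn_iff.mpr hxN, hDC.ssubset_of_ne ?_,
    (hCN.trans inter_subset_right).ssubset_of_ne ?_⟩
  · intro heq
    obtain ⟨n, V, hVo, hVd, hNV, hVU⟩ := exists_disjoint_open_cover hN
      (U := fun b : Bool => if b then O else Dᶜ)
      (by rintro (_ | _); exacts [hD.isOpen_compl, hO])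
      (by
        intro z hz
        by_cases hzx : (connectedComponentIn N z ∩ D).Nonempty
        · refine ⟨true, ?_⟩
          obtain ⟨w, hw, hwD⟩ := hzx
          rw [connectedComponentIn_eq hw, ← connectedComponentIn_eq (hDC hwD), ← heq]
          exact hDO
        · refine ⟨false, fun w hw hwD => hzx ⟨w, hw, hwD⟩⟩)
    -- a component equal to `D` could be cut off by a clopen set, disconnecting `L`
    set A := ⋃ j ∈ {j | (V j ∩ D).Nonempty}, V j with hA
    set B := (⋃ j ∈ {j | ¬ (V j ∩ D).Nonempty}, V j) ∪ (closure O)ᶜ with hB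
    have hAO : A ⊆ O := by
      refine iUnion₂_subset fun j hj => ?_
      obtain ⟨b, hb⟩ := hVU j
      cases b
      · obtain ⟨w, hw, hwD⟩ := hj
        exact absurd hwD (hb hw)
      · exact hb
    have hLAB : L ⊆ A ∪ B := by
      intro z hz
      by_cases hzO : z ∈ closure O
      · obtain ⟨j, hj⟩ := mem_iUnion.mp (hNV ⟨hzO, hz⟩)
        by_cases hjD : (V j ∩ D).Nonempty
        · exact Or.inl (mem_iUnion₂.mpr ⟨j, hjD, hj⟩)
        · exact Or.inr (Or.inl (mem_iUnion₂.mpr ⟨j, hjD, hj⟩))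
      · exact Or.inr (Or.inr hzO)
    have hxA : x ∈ A := by
      obtain ⟨j, hj⟩ := mem_iUnion.mp (hNV hxN)
      exact mem_iUnion₂.mpr ⟨j, ⟨x, hj, hx⟩, hj⟩
    obtain ⟨z, -, hzA, hzB⟩ := hLc A B (isOpen_biUnion fun j _ => hVo j)
      ((isOpen_biUnion fun j _ => hVo j).union isClosed_closure.isOpen_compl) hLAB
      ⟨x, hDL.subset hx, hxA⟩ ⟨y, hyL, Or.inr fun hy => hyO hy rfl⟩
    rcases hzB with hzB | hzB
    · obtain ⟨j, hj, hzj⟩ := mem_iUnion₂.mp hzA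
      obtain ⟨k, hk, hzk⟩ := mem_iUnion₂.mp hzB
      have hjk : j ≠ k := by rintro rfl; exact hk hj
      exact Set.disjoint_left.mp (hVd hjk) hzj hzk
    · exact hzB (subset_closure (hAO hzA))
  · intro heq
    exact hyO (hCN (heq ▸ hyL)).1 rfl

/-- The maximum of a function on a nonempty compact set. -/
noncomputable def hi {Z : Type*} [TopologicalSpace Z] (u : Z → ℝ) (D : NonemptyCompacts Z) : ℝ :=
  sSup (u '' D)

section hi
variable {Z : Type*} [TopologicalSpace Z] {u : Z → ℝ}

lemma exists_eq_hi (hu : Continuous u) (D : NonemptyCompacts Z) : ∃ z ∈ D, u z = hi u D :=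
  (D.isCompact.image hu).sSup_mem (D.nonempty.image u)

lemma le_hi (hu : Continuous u) {D : NonemptyCompacts Z} {z : Z} (hz : z ∈ D) : u z ≤ hi u D :=
  le_csSup (D.isCompact.image hu).bddAbove (mem_image_of_mem u hz)

lemma continuous_hi (hu : Continuous u) : Continuous (hi u) := by
  rw [continuous_iff_continuousAt]
  intro D
  refine tendsto_order.mpr ⟨fun a ha => ?_, fun a ha => ?_⟩
  · obtain ⟨z, hz, hzD⟩ := exists_eq_hi hu D
    filter_upwards [(NonemptyCompacts.isOpen_inter_nonempty_of_isOpen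
      (isOpen_Ioi.preimage hu : IsOpen (u ⁻¹' Ioi a))).mem_nhds
      (show (↑D ∩ u ⁻¹' Ioi a).Nonempty from ⟨z, hz, by simpa [hzD] using ha⟩)] with D' hD'
    obtain ⟨z', hz', hz''⟩ := hD'
    exact lt_of_lt_of_le hz'' (le_hi hu hz')
  · filter_upwards [(NonemptyCompacts.isOpen_subsets_of_isOpen
      (isOpen_Iio.preimage hu : IsOpen (u ⁻¹' Iio a))).mem_nhds
      (show ↑D ⊆ u ⁻¹' Iio a from fun z hz => lt_of_le_of_lt (le_hi hu hz) ha)] with D' hD'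
    obtain ⟨z, hz, hzD⟩ := exists_eq_hi hu D'
    rw [← hzD]
    exact hD' hz

lemma hi_mono (hu : Continuous u) {D D' : NonemptyCompacts Z} (h : (D : Set Z) ⊆ D') :
    hi u D ≤ hi u D' := by
  obtain ⟨z, hz, hzD⟩ := exists_eq_hi hu D
  rw [← hzD]
  exact le_hi hu (h hz)

end hi

lemma isClosed_isPreconnected {Z : Type*} [TopologicalSpace Z] [CompactSpace Z] [T2Space Z] :
    IsClosed {D : NonemptyCompacts Z | IsPreconnected (D : Set Z)} := by
  rw [← isOpen_compl_iff, isOpen_iff_mem_nhds]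
  intro D hD
  have hD' : ¬ IsPreconnected (D : Set Z) := hD
  rw [isPreconnected_iff_subset_of_fully_disjoint_closed D.isCompact.isClosed] at hD'
  push Not at hD'
  obtain ⟨A, B, hA, hB, hDAB, hAB, hnA, hnB⟩ := hD'
  obtain ⟨U, V, hU, hV, hAU, hBV, hUV⟩ := normal_separation hA hB hAB
  have hUn : ((D : Set Z) ∩ U).Nonempty := by
    obtain ⟨z, hz, hzB⟩ := not_subset.mp hnB
    exact ⟨z, hz, hAU ((hDAB hz).resolve_right hzB)⟩
  have hVn : ((D : Set Z) ∩ V).Nonempty := by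
    obtain ⟨z, hz, hzA⟩ := not_subset.mp hnA
    exact ⟨z, hz, hBV ((hDAB hz).resolve_left hzA)⟩
  filter_upwards [(NonemptyCompacts.isOpen_subsets_of_isOpen (hU.union hV)).mem_nhds
      (show (D : Set Z) ⊆ U ∪ V from hDAB.trans (union_subset_union hAU hBV)),
    (NonemptyCompacts.isOpen_inter_nonempty_of_isOpen hU).mem_nhds hUn,
    (NonemptyCompacts.isOpen_inter_nonempty_of_isOpen hV).mem_nhds hVn] with D' h1 h2 h3 h4
  obtain ⟨z, -, hzU, hzV⟩ := h4 U V hU hV h1 h2 h3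
  exact Set.disjoint_left.mp hUV hzU hzV

/-- The oscillation of a function on a nonempty compact set, that is, its maximum minus its
minimum, the latter being written as minus the maximum of `-u`. -/
noncomputable def osc {Z : Type*} [TopologicalSpace Z] (u : Z → ℝ) (D : NonemptyCompacts Z) : ℝ :=
  hi u D + hi (-u) D

section osc
variable {Z : Type*} [TopologicalSpace Z] {u : Z → ℝ}

lemma continuous_osc (hu : Continuous u) : Continuous (osc u) :=
  (continuous_hi hu).add (continuous_hi hu.neg)

lemma osc_mono (hu : Continuous u) {D D' : NonemptyCompacts Z} (h : (D : Set Z) ⊆ D') :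
    osc u D ≤ osc u D' :=
  add_le_add (hi_mono hu h) (hi_mono hu.neg h)

lemma osc_nonneg (hu : Continuous u) (D : NonemptyCompacts Z) : 0 ≤ osc u D := by
  obtain ⟨z, hz⟩ := D.nonempty
  have h1 := le_hi hu hz
  have h2 := le_hi hu.neg hz
  simp only [Pi.neg_apply] at h2
  unfold osc
  linarith

lemma osc_le (hu : Continuous u) {D : NonemptyCompacts Z} {M : ℝ}
    (hM : ∀ z ∈ D, ∀ w ∈ D, u z - u w ≤ M) : osc u D ≤ M := by
  obtain ⟨z, hz, h1⟩ := exists_eq_hi hu D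
  obtain ⟨w, hw, h2⟩ := exists_eq_hi hu.neg D
  have := hM z hz w hw
  simp only [Pi.neg_apply] at h2
  unfold osc
  linarith

end osc

/-- A Whitney map on the space of nonempty compact subsets of a compact metric space: it measures
the size of a set continuously and strictly monotonically. It is a weighted sum of the oscillations
of the distances to the points of a dense sequence. -/
noncomputable def whitney {Z : Type*} [MetricSpace Z] [CompactSpace Z] [Nonempty Z]
    (D : NonemptyCompacts Z) : ℝ :=
  ∑' i, (1 / 2 : ℝ) ^ i * osc (dist (denseSeq Z i)) D

section whitney
variable {Z : Type*} [MetricSpace Z] [CompactSpace Z] [Nonempty Z]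

lemma whitney_bound (i : ℕ) (D : NonemptyCompacts Z) :
    ‖(1 / 2 : ℝ) ^ i * osc (dist (denseSeq Z i)) D‖
      ≤ (1 / 2 : ℝ) ^ i * Metric.diam (univ : Set Z) := by
  have hc : Continuous (dist (denseSeq Z i)) := by fun_prop
  rw [Real.norm_of_nonneg (mul_nonneg (by positivity) (osc_nonneg hc D))]
  refine mul_le_mul_of_nonneg_left (osc_le hc fun z _ w _ => ?_) (by positivity)
  have h1 := dist_triangle (denseSeq Z i) w z
  have h2 := Metric.dist_le_diam_of_mem isCompact_univ.isBounded (mem_univ w) (mem_univ z)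
  linarith

lemma summable_whitney (D : NonemptyCompacts Z) :
    Summable fun i : ℕ => (1 / 2 : ℝ) ^ i * osc (dist (denseSeq Z i)) D :=
  Summable.of_norm_bounded (summable_geometric_two.mul_right _) fun i => whitney_bound i D

lemma continuous_whitney : Continuous (whitney (Z := Z)) :=
  continuous_tsum (fun _ => continuous_const.mul (continuous_osc (by fun_prop)))
    (summable_geometric_two.mul_right _) whitney_bound

lemma whitney_lt {D D' : NonemptyCompacts Z} (h : (D : Set Z) ⊂ D') :
    whitney D < whitney D' := by
  obtain ⟨x, hx', hx⟩ := exists_of_ssubset h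
  -- a point of the dense sequence closer to `x` than to every point of `D` detects the difference
  obtain ⟨d, hd, hdx⟩ : ∃ d > 0, ∀ z ∈ D, d ≤ dist x z := by
    obtain ⟨d, hd, hsub⟩ := Metric.isOpen_iff.mp D.isCompact.isClosed.isOpen_compl x hx
    refine ⟨d, hd, fun z hz => ?_⟩
    by_contra! hlt
    exact hsub (Metric.mem_ball'.mpr hlt) hz
  obtain ⟨i, hi'⟩ := (denseRange_denseSeq Z).exists_dist_lt x (half_pos hd)
  refine Summable.tsum_lt_tsum (i := i) (fun j => ?_) ?_ (summable_whitney D) (summable_whitney D')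
  · exact mul_le_mul_of_nonneg_left (osc_mono (by fun_prop) h.subset) (by positivity)
  · have hc : Continuous (dist (denseSeq Z i)) := by fun_prop
    refine mul_lt_mul_of_pos_left ?_ (by positivity)
    refine add_lt_add_of_le_of_lt (hi_mono hc h.subset) ?_
    obtain ⟨w, hw, hw'⟩ := exists_eq_hi hc.neg D
    have h1 := le_hi hc.neg hx'
    have h2 := hdx w hw
    have h3 := dist_triangle x (denseSeq Z i) w
    rw [← hw']
    rw [dist_comm] at hi'
    simp only [Pi.neg_apply] at h1 ⊢
    rw [dist_comm x (denseSeq Z i)] at h3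
    linarith [dist_comm x (denseSeq Z i)]

lemma whitney_singleton (z : Z) : whitney ({z} : NonemptyCompacts Z) = 0 := by
  unfold whitney
  convert tsum_zero with i
  have hc : Continuous (dist (denseSeq Z i)) := by fun_prop
  rw [mul_eq_zero]
  right
  refine le_antisymm (osc_le hc ?_) (osc_nonneg hc _)
  intro a ha b hb
  rw [NonemptyCompacts.mem_singleton] at ha hb
  simp [ha, hb]

lemma whitney_pos {D : NonemptyCompacts Z} (hD : (D : Set Z).Nontrivial) : 0 < whitney D := by
  obtain ⟨x, hx, y, hy, hxy⟩ := hD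
  rw [← whitney_singleton x]
  refine whitney_lt ((ssubset_iff_of_subset ?_).mpr ⟨y, hy, ?_⟩)
  · simpa using hx
  · simpa using hxy.symm

/-- Sets of small Whitney size have small diameter, by compactness of the hyperspace. -/
lemma exists_whitney_small {ε : ℝ} (hε : 0 < ε) :
    ∃ t > 0, ∀ D : NonemptyCompacts Z, whitney D < t → ∀ x ∈ D, ∀ y ∈ D, dist x y < ε := by
  set E : Set (NonemptyCompacts Z) := {D | ∀ x ∈ D, ∀ y ∈ D, dist x y < ε}
  have hE : IsOpen E := by
    rw [isOpen_iff_mem_nhds]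
    intro D hD
    obtain ⟨u, v, hu, hv, hDu, hDv, huv⟩ := generalized_tube_lemma D.isCompact D.isCompact
      (isOpen_lt (continuous_dist (α := Z)) continuous_const : IsOpen {p : Z × Z | dist p.1 p.2 < ε})
      (fun p hp => hD p.1 hp.1 p.2 hp.2)
    filter_upwards [(NonemptyCompacts.isOpen_subsets_of_isOpen (hu.inter hv)).mem_nhds
      (subset_inter hDu hDv)] with D' hD' x hx y hy
    exact huv (mk_mem_prod (hD' hx).1 (hD' hy).2)
  rcases (Eᶜ).eq_empty_or_nonempty with h | h
  · refine ⟨1, one_pos, fun D _ => ?_⟩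
    have : D ∈ E := by rw [compl_empty_iff.mp h]; trivial
    exact this
  · obtain ⟨D₀, hD₀, hmin⟩ := hE.isClosed_compl.isCompact.exists_isMinOn h
      continuous_whitney.continuousOn
    refine ⟨whitney D₀, whitney_pos ?_, fun D hD => ?_⟩
    · simp only [E, mem_compl_iff, mem_ofPred_eq, not_forall, not_lt] at hD₀
      obtain ⟨x, hx, y, hy, hxy⟩ := hD₀
      exact ⟨x, hx, y, hy, fun h => by simp [h] at hxy; linarith⟩
    · by_contra hcon
      exact absurd (hmin (show D ∈ Eᶜ from hcon)) (not_le.mpr hD)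

/-- A hereditarily indecomposable continuum decomposes continuously into arbitrarily small
nontrivial subcontinua, the members of a Whitney level. Every point lies in a continuum of the
given size by boundary bumping, and only in one since intersecting continua are comparable. -/
lemma exists_decomposition [ConnectedSpace Z] [Nontrivial Z] (hZ : HereditarilyIndecomposable Z)
    {ε : ℝ} (hε : 0 < ε) :
    ∃ X : Set (NonemptyCompacts Z), IsClosed X ∧ (∀ D ∈ X, IsConnected (D : Set Z)) ∧
      (∀ D ∈ X, (D : Set Z).Nontrivial) ∧ (∀ D ∈ X, ∀ x ∈ D, ∀ y ∈ D, dist x y < ε) ∧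
      ∀ z, ∃ D ∈ X, z ∈ D ∧ ∀ D' ∈ X, z ∈ D' → D' = D := by
  obtain ⟨t₀, ht₀, hsmall⟩ := exists_whitney_small (Z := Z) hε
  set t := min t₀ (whitney (⊤ : NonemptyCompacts Z)) / 2 with ht
  have hZpos : 0 < whitney (⊤ : NonemptyCompacts Z) := whitney_pos (by simpa using nontrivial_univ)
  have htpos : 0 < t := half_pos (lt_min ht₀ hZpos)
  have htt₀ : t < t₀ := (half_lt_self (lt_min ht₀ hZpos)).trans_le (min_le_left _ _)
  have htZ : t < whitney (⊤ : NonemptyCompacts Z) :=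
    (half_lt_self (lt_min ht₀ hZpos)).trans_le (min_le_right _ _)
  have hmem : ∀ z : Z, IsClosed {D : NonemptyCompacts Z | z ∈ D} := by
    intro z
    convert NonemptyCompacts.isClosed_inter_nonempty_of_isClosed (isClosed_singleton (x := z))
      using 3
    simp
  refine ⟨{D | IsPreconnected (D : Set Z) ∧ whitney D = t}, ?_, fun D hD => ⟨D.nonempty, hD.1⟩,
    fun D hD => ?_, fun D hD => hsmall D (hD.2.trans_lt htt₀), fun z => ?_⟩
  · exact isClosed_isPreconnected.inter (isClosed_eq continuous_whitney continuous_const)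
  · rw [← not_subsingleton_iff]
    intro hs
    obtain ⟨z, hz⟩ := D.nonempty
    have : D = {z} := by
      ext w
      simpa using ⟨fun hw => hs hw hz, fun hw => hw ▸ hz⟩
    rw [this, mem_ofPred_eq, whitney_singleton] at hD
    exact htpos.ne hD.2
  · obtain ⟨D, ⟨⟨hDc, hzD⟩, hDt⟩, hDmax⟩ :=
      ((isClosed_isPreconnected.inter (hmem z)).inter
        (isClosed_le continuous_whitney (continuous_const (y := t)))).isCompact.exists_isMaxOn
      ⟨{z}, ⟨by simpa using isPreconnected_singleton, by simp⟩, by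
        simp only [mem_ofPred_eq, whitney_singleton]; exact htpos.le⟩ continuous_whitney.continuousOn
    have hDt' : whitney D = t := by
      refine le_antisymm hDt (not_lt.mp fun hlt => ?_)
      have hcl : IsClosed {L : NonemptyCompacts Z | (D : Set Z) ⊆ L} := by
        have : {L : NonemptyCompacts Z | (D : Set Z) ⊆ L} = ⋂ z ∈ D, {L | z ∈ L} := by
          ext L; simp [subset_def]
        rw [this]
        exact isClosed_biInter fun z _ => hmem z
      obtain ⟨L, ⟨⟨hLc, hDL⟩, hLt⟩, hLmin⟩ :=
        ((isClosed_isPreconnected.inter hcl).inter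
          (isClosed_le (continuous_const (y := t)) continuous_whitney)).isCompact.exists_isMinOn
        ⟨⊤, ⟨by simpa using isPreconnected_univ, by simp⟩, htZ.le⟩ continuous_whitney.continuousOn
      have hne : (D : Set Z) ≠ L := by
        intro h
        rw [SetLike.coe_injective h] at hlt
        exact absurd hLt (not_le.mpr hlt)
      obtain ⟨C, hC, hCc, hDC, hCL⟩ := exists_continuum_between D.isCompact.isClosed
        ⟨D.nonempty, hDc⟩ L.isCompact.isClosed hLc (hDL.ssubset_of_ne hne)
      set C' : NonemptyCompacts Z := ⟨⟨C, hC.isCompact⟩, hCc.nonempty⟩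
      have h1 : whitney D < whitney C' := whitney_lt hDC
      have h2 : whitney C' < whitney L := whitney_lt hCL
      rcases le_total (whitney C') t with h | h
      · exact absurd (hDmax ⟨⟨hCc.isPreconnected, hDC.subset hzD⟩, h⟩) (not_le.mpr h1)
      · exact absurd (hLmin ⟨⟨hCc.isPreconnected, hDC.subset⟩, h⟩) (not_le.mpr h2)
    refine ⟨D, ⟨hDc, hDt'⟩, hzD, fun D' hD' hzD' => ?_⟩
    by_contra hne
    have hne' : (D' : Set Z) ≠ D := fun h => hne (SetLike.coe_injective h)
    rcases hZ.nested ⟨D'.isCompact, D'.nonempty, hD'.1⟩ ⟨D.isCompact, D.nonempty, hDc⟩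
      ⟨z, hzD', hzD⟩ with h | h
    · have := whitney_lt (h.ssubset_of_ne hne')
      rw [hD'.2, hDt'] at this
      exact lt_irrefl _ this
    · have := whitney_lt (h.ssubset_of_ne hne'.symm)
      rw [hD'.2, hDt'] at this
      exact lt_irrefl _ this

end whitney

/-! ### Every continuum is an image of a continuum in `ℝ⁴` -/

/-- If a measure of mass one supported on `{A, B}` and a probability measure supported on `{x, y}`
have the same first four moments, then their supports meet. -/
lemma eq_or_eq_of_moments {A B x y l k : ℝ} (hk : 0 ≤ k) (hk1 : k ≤ 1)
    (h1 : (1 - l) * A ^ 1 + l * B ^ 1 = (1 - k) * x ^ 1 + k * y ^ 1)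
    (h2 : (1 - l) * A ^ 2 + l * B ^ 2 = (1 - k) * x ^ 2 + k * y ^ 2)
    (h3 : (1 - l) * A ^ 3 + l * B ^ 3 = (1 - k) * x ^ 3 + k * y ^ 3)
    (h4 : (1 - l) * A ^ 4 + l * B ^ 4 = (1 - k) * x ^ 4 + k * y ^ 4) :
    (x = A ∨ x = B) ∨ (y = A ∨ y = B) := by
  -- integrate the nonnegative quartic `((t - A) (t - B)) ^ 2` against both measures
  have key : (1 - k) * ((x - A) * (x - B)) ^ 2 + k * ((y - A) * (y - B)) ^ 2 = 0 := by
    linear_combination (-1 : ℝ) * h4 + 2 * (A + B) * h3 - (A ^ 2 + 4 * A * B + B ^ 2) * h2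
      + 2 * A * B * (A + B) * h1
  have p1 : 0 ≤ (1 - k) * ((x - A) * (x - B)) ^ 2 := mul_nonneg (by linarith) (sq_nonneg _)
  have p2 : 0 ≤ k * ((y - A) * (y - B)) ^ 2 := mul_nonneg hk (sq_nonneg _)
  have e1 : (1 - k) * ((x - A) * (x - B)) ^ 2 = 0 := by linarith
  have e2 : k * ((y - A) * (y - B)) ^ 2 = 0 := by linarith
  simp only [mul_eq_zero, pow_eq_zero_iff two_ne_zero, sub_eq_zero] at e1 e2
  rcases e1 with e1 | e1
  · rcases e2 with e2 | e2
    · linarith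
    · exact Or.inr e2
  · exact Or.inl e1

/-- Every continuum is the image of a continuum lying in `ℝ⁴`. The latter is obtained from a
Cantor set mapped onto `W` by joining any two points with the same image by a segment, and
realizing these segments disjointly by means of the moment curve. -/
lemma exists_continuum_map {W : Type*} [TopologicalSpace W] (hW : IsContinuum W) :
    ∃ K : Set (Fin 4 → ℝ), IsCompact K ∧ IsConnected K ∧
      ∃ φ : K → W, Continuous φ ∧ Function.Surjective φ := by
  obtain ⟨hne, hcomp, hconn, hmet⟩ := hW
  let _ := metrizableSpaceMetric W
  obtain ⟨c, hc, hcs⟩ := exists_nat_bool_continuous_surjective_of_compact W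
  set s : (ℕ → Bool) → ℝ := fun a => (cantorSetHomeomorphNatToBool.symm a : ℝ) with hs
  have hsc : Continuous s := continuous_subtype_val.comp (Homeomorph.continuous _)
  have hsi : Function.Injective s :=
    Subtype.val_injective.comp cantorSetHomeomorphNatToBool.symm.injective
  let Q := {p : ((ℕ → Bool) × (ℕ → Bool)) × unitInterval // c p.1.1 = c p.1.2}
  have hQ : IsClosed {p : ((ℕ → Bool) × (ℕ → Bool)) × unitInterval | c p.1.1 = c p.1.2} :=
    isClosed_eq (by fun_prop) (by fun_prop)
  have : CompactSpace Q := isCompact_iff_compactSpace.mp hQ.isCompact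
  let m : Q → (Fin 4 → ℝ) := fun p k =>
    (1 - (p.1.2 : ℝ)) * s p.1.1.1 ^ ((k : ℕ) + 1) + (p.1.2 : ℝ) * s p.1.1.2 ^ ((k : ℕ) + 1)
  have hm : Continuous m := by fun_prop
  let g : C(Q, W) := ⟨fun p => c p.1.1.1, by fun_prop⟩
  let m' : C(Q, range m) := ⟨rangeFactorization m, hm.subtype_mk _⟩
  have hq : IsQuotientMap m' :=
    m'.continuous.isClosedMap.isQuotientMap m'.continuous rangeFactorization_surjective
  have hfac : Function.FactorsThrough g m' := by
    rintro ⟨⟨⟨a, b⟩, l⟩, hab⟩ ⟨⟨⟨a', b'⟩, l'⟩, hab'⟩ h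
    have h' : ∀ k : Fin 4, m ⟨⟨⟨a, b⟩, l⟩, hab⟩ k = m ⟨⟨⟨a', b'⟩, l'⟩, hab'⟩ k :=
      fun k => congrFun (congrArg Subtype.val h) k
    have := eq_or_eq_of_moments l'.2.1 l'.2.2 (h' 0) (h' 1) (h' 2) (h' 3)
    simp only [hsi.eq_iff] at this hab hab'
    change c a = c a'
    rcases this with (h | h) | (h | h)
    · rw [h]
    · rw [h, hab]
    · rw [hab', h]
    · rw [hab', h, hab]
  let φ : C(range m, W) := hq.lift g hfac
  have hφ : ∀ p, φ (m' p) = g p := fun p => by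
    have := hq.lift_comp g hfac
    exact congrArg (fun F : C(Q, W) => F p) this
  have hφs : Function.Surjective φ := by
    intro w
    obtain ⟨a, rfl⟩ := hcs w
    exact ⟨m' ⟨⟨⟨a, a⟩, 0⟩, rfl⟩, hφ _⟩
  have : CompactSpace (range m) := isCompact_iff_compactSpace.mp (isCompact_range hm)
  refine ⟨range m, isCompact_range hm, ?_, φ, φ.continuous, hφs⟩
  have hseg : ∀ a b (h : c a = c b), IsPreconnected (range fun l => m' ⟨⟨⟨a, b⟩, l⟩, h⟩) :=
    fun a b h => isPreconnected_range (m'.continuous.comp (by fun_prop))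
  have hfib : ∀ w : W, IsConnected (φ ⁻¹' {w}) := by
    intro w
    obtain ⟨e, rfl⟩ := hcs w
    refine ⟨⟨m' ⟨⟨⟨e, e⟩, 0⟩, rfl⟩, hφ _⟩, ?_⟩
    refine isPreconnected_of_forall (m' ⟨⟨⟨e, e⟩, 0⟩, rfl⟩) fun y hy => ?_
    obtain ⟨⟨⟨⟨a, b⟩, l⟩, hab⟩, rfl⟩ := hq.surjective y
    have hy' : c a = c e := (hφ _).symm.trans hy
    have hab' : c a = c b := hab
    have heb : c e = c b := hy'.symm.trans hab'
    refine ⟨(range fun l => m' ⟨⟨⟨e, b⟩, l⟩, heb⟩) ∪ (range fun l => m' ⟨⟨⟨a, b⟩, l⟩, hab⟩),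
      ?_, Or.inl ⟨0, ?_⟩, Or.inr ⟨l, rfl⟩,
      (hseg e b heb).union (m' ⟨⟨⟨a, b⟩, 1⟩, hab⟩) ⟨1, ?_⟩ ⟨1, rfl⟩ (hseg a b hab)⟩
    · rintro _ (⟨l, rfl⟩ | ⟨l, rfl⟩)
      · exact hφ _
      · exact (hφ _).trans hy'
    · apply Subtype.ext; funext k; change m _ k = m _ k; simp [m]
    · apply Subtype.ext; funext k; change m _ k = m _ k; simp [m]
  have hcoind : IsCoinducing φ :=
    (φ.continuous.isClosedMap.isQuotientMap φ.continuous hφs).isCoinducing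
  have := hcoind.isConnected_preimage_of_isClosed hfib isClosed_univ isConnected_univ
  rw [preimage_univ] at this
  have h2 := this.image Subtype.val continuous_subtype_val.continuousOn
  rwa [image_univ, Subtype.range_coe] at h2

/-! ### Maps into Euclidean space omitting a point of a given continuum -/

/-- For points `p`, `p'` of a connected set `K` there is a self-map of the space, supported in a
neighborhood of `K`, under which only `p` can go to `p'`. After such a map, a function omitting `p`
omits `p'`. The maps compose, so that it suffices to treat nearby points. -/
lemma exists_push {E : Type*} [NormedAddCommGroup E] [NormedSpace ℝ E] {K : Set E}
    (hK : IsPreconnected K) {r : ℝ} (hr : 0 < r) {p p' : E} (hp : p ∈ K) (hp' : p' ∈ K) :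
    ∃ h : C(E, E), (∀ x ∉ Metric.thickening r K, h x = x) ∧
      (∀ x ∈ Metric.thickening r K, h x ∈ Metric.thickening r K) ∧ ∀ x, h x = p' → x = p := by
  have loc : ∀ p ∈ K, ∀ p', ‖p' - p‖ < r →
      ∃ h : C(E, E), (∀ x ∉ Metric.thickening r K, h x = x) ∧
      (∀ x ∈ Metric.thickening r K, h x ∈ Metric.thickening r K) ∧ ∀ x, h x = p' → x = p := by
    intro p hp p' hpp
    refine ⟨⟨fun x => x + max 0 (1 - ‖x - p‖ / r) • (p' - p), by fun_prop⟩, ?_, ?_, ?_⟩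
    · intro x hx
      have hxr : r ≤ ‖x - p‖ := by
        by_contra! h
        exact hx (Metric.mem_thickening_iff.mpr ⟨p, hp, by rwa [dist_eq_norm]⟩)
      have : max 0 (1 - ‖x - p‖ / r) = 0 :=
        max_eq_left (sub_nonpos.mpr ((one_le_div hr).mpr hxr))
      simp [this]
    · intro x hx
      rcases le_or_gt r ‖x - p‖ with hxr | hxr
      · have : max 0 (1 - ‖x - p‖ / r) = 0 :=
          max_eq_left (sub_nonpos.mpr ((one_le_div hr).mpr hxr))
        simpa [this] using hx
      · have hpos : 0 < 1 - ‖x - p‖ / r := sub_pos.mpr ((div_lt_one hr).mpr hxr)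
        refine Metric.mem_thickening_iff.mpr ⟨p, hp, ?_⟩
        simp only [ContinuousMap.coe_mk, max_eq_right hpos.le, dist_eq_norm]
        calc ‖x + (1 - ‖x - p‖ / r) • (p' - p) - p‖
            = ‖(x - p) + (1 - ‖x - p‖ / r) • (p' - p)‖ := by congr 1; abel
          _ ≤ ‖x - p‖ + (1 - ‖x - p‖ / r) * ‖p' - p‖ := by
              refine (norm_add_le _ _).trans ?_
              rw [norm_smul, Real.norm_of_nonneg hpos.le]
          _ < ‖x - p‖ + (1 - ‖x - p‖ / r) * r := by gcongr
          _ = r := by field_simp; ring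
    · intro x hx
      simp only [ContinuousMap.coe_mk] at hx
      rcases le_or_gt r ‖x - p‖ with hxr | hxr
      · have : max 0 (1 - ‖x - p‖ / r) = 0 :=
          max_eq_left (sub_nonpos.mpr ((one_le_div hr).mpr hxr))
        rw [this, zero_smul, add_zero] at hx
        rw [hx] at hxr
        exact absurd hpp (not_lt.mpr hxr)
      · have hpos : 0 < 1 - ‖x - p‖ / r := sub_pos.mpr ((div_lt_one hr).mpr hxr)
        rw [max_eq_right hpos.le] at hx
        have h1 : x - p = (‖x - p‖ / r) • (p' - p) := by
          linear_combination (norm := module) hx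
        have h3 := congrArg norm h1
        rw [norm_smul, Real.norm_of_nonneg (by positivity)] at h3
        by_contra hne
        have hn : 0 < ‖x - p‖ := norm_pos_iff.mpr (sub_ne_zero.mpr hne)
        have : ‖x - p‖ / r * ‖p' - p‖ < ‖x - p‖ / r * r := by gcongr
        rw [div_mul_cancel₀ _ hr.ne', ← h3] at this
        exact lt_irrefl _ this
  refine hK.induction₂' (fun p p' => ∃ h : C(E, E), (∀ x ∉ Metric.thickening r K, h x = x) ∧
    (∀ x ∈ Metric.thickening r K, h x ∈ Metric.thickening r K) ∧ ∀ x, h x = p' → x = p)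
    ?_ ?_ hp hp'
  · intro x hx
    filter_upwards [self_mem_nhdsWithin, mem_nhdsWithin_of_mem_nhds (Metric.ball_mem_nhds x hr)]
      with y hy hxy
    rw [mem_ball_iff_norm] at hxy
    exact ⟨loc x hx y hxy, loc y hy x (by rwa [norm_sub_rev])⟩
  · rintro x y z - - - ⟨h, h1, h2, h3⟩ ⟨k, k1, k2, k3⟩
    refine ⟨k.comp h, fun w hw => ?_, fun w hw => k2 _ (h2 w hw), fun w hw => h3 w (k3 _ hw)⟩
    rw [ContinuousMap.comp_apply, h1 w hw, k1 w hw]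

/-- If no continuum in `X` is mapped by `f` onto the continuum `K`, then `f` can be changed inside
the preimage of a neighborhood of `K` so as to omit a point of `K`. -/
lemma exists_omitting {X E : Type*} [TopologicalSpace X] [CompactSpace X] [T2Space X]
    [NormedAddCommGroup E] [NormedSpace ℝ E] {K : Set E} (hKc : IsCompact K) (hK : IsConnected K)
    (f : C(X, E)) (hno : ¬ ∃ C : Set X, IsClosed C ∧ IsConnected C ∧ f '' C = K) :
    ∃ f' : C(X, E), ∃ p ∈ K, (∀ x, f' x ≠ p) ∧
      ∀ x, f' x = f x ∨ (f x ∈ Metric.thickening 1 K ∧ f' x ∈ Metric.thickening 1 K) := by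
  classical
  have hT : IsClosed (f ⁻¹' K) := hKc.isClosed.preimage f.continuous
  -- a component of `f ⁻¹' K` is not mapped onto `K`, so it lies in one of the sets `f ⁻¹' {p}ᶜ`
  obtain ⟨n, V, hVo, hVd, hTV, hVU⟩ := exists_disjoint_open_cover hT
    (U := fun p : K => f ⁻¹' {(p : E)}ᶜ)
    (fun p => isClosed_singleton.isOpen_compl.preimage f.continuous)
    (by
      intro x hx
      by_contra! hcon
      refine hno ⟨_, isClosed_connectedComponentIn hT x,
        isConnected_connectedComponentIn_iff.mpr hx, Subset.antisymm ?_ ?_⟩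
      · exact image_subset_iff.mpr (connectedComponentIn_subset _ _)
      · intro p hp
        obtain ⟨y, hy, hyp⟩ := not_subset.mp (hcon ⟨p, hp⟩)
        simp only [mem_preimage, mem_compl_iff, mem_singleton_iff, not_not] at hyp
        exact ⟨y, hy, hyp⟩)
  choose q hq using hVU
  have hW : IsOpen (f '' (⋃ j, V j)ᶜ)ᶜ :=
    ((isOpen_iUnion hVo).isClosed_compl.isCompact.image f.continuous).isClosed.isOpen_compl
  have hKW : K ⊆ (f '' (⋃ j, V j)ᶜ)ᶜ := by
    rintro p hp ⟨x, hx, rfl⟩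
    exact hx (hTV hp)
  obtain ⟨δ, hδ, hδW⟩ := hKc.exists_cthickening_subset_open hW hKW
  set r := min δ 1
  have hr : 0 < r := lt_min hδ one_pos
  have hrW : ∀ x, f x ∈ Metric.cthickening r K → ∃ j, x ∈ V j := by
    intro x hx
    by_contra hcon
    exact hδW (Metric.cthickening_mono (min_le_left _ _) K hx)
      ⟨x, fun h => hcon (mem_iUnion.mp h), rfl⟩
  obtain ⟨p, hp⟩ := hK.nonempty
  choose h h1 h2 h3 using fun j => exists_push hK.isPreconnected hr (q j).2 hp
  let F : X → E := fun x => if hx : ∃ j, x ∈ V j then h hx.choose (f x) else f x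
  have hF1 : ∀ j, ∀ x ∈ V j, F x = h j (f x) := by
    intro j x hx
    have hex : ∃ j, x ∈ V j := ⟨j, hx⟩
    have : hex.choose = j := by
      by_contra hne
      exact Set.disjoint_left.mp (hVd hne) hex.choose_spec hx
    simp only [F, hex, dif_pos, this]
  have hF2 : ∀ x, f x ∉ Metric.thickening r K → F x = f x := by
    intro x hx
    by_cases hex : ∃ j, x ∈ V j
    · obtain ⟨j, hj⟩ := hex
      rw [hF1 j x hj, h1 j _ hx]
    · simp only [F, hex, dif_neg, not_false_eq_true]
  have hFc : Continuous F := by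
    rw [continuous_iff_continuousAt]
    intro x
    by_cases hex : ∃ j, x ∈ V j
    · obtain ⟨j, hj⟩ := hex
      have hc : Continuous fun x => h j (f x) := by fun_prop
      refine hc.continuousAt.congr ?_
      filter_upwards [(hVo j).mem_nhds hj] with y hy
      exact (hF1 j y hy).symm
    · refine f.continuous.continuousAt.congr ?_
      filter_upwards [(Metric.isClosed_cthickening.isOpen_compl.preimage f.continuous).mem_nhds
        (fun hx => hex (hrW x hx))] with y hy
      exact (hF2 y fun h => hy (Metric.thickening_subset_cthickening r K h)).symm
  refine ⟨⟨F, hFc⟩, p, hp, fun x => ?_, fun x => ?_⟩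
  · rw [ContinuousMap.coe_mk]
    by_cases hex : ∃ j, x ∈ V j
    · obtain ⟨j, hj⟩ := hex
      rw [hF1 j x hj]
      exact fun hx => hq j hj (h3 j _ hx)
    · have hx : f x ∉ Metric.cthickening r K := fun hx => hex (hrW x hx)
      rw [hF2 x fun h => hx (Metric.thickening_subset_cthickening r K h)]
      rintro rfl
      exact hx (Metric.self_subset_cthickening K hp)
  · rw [ContinuousMap.coe_mk]
    by_cases hx : f x ∈ Metric.thickening r K
    · right
      obtain ⟨j, hj⟩ := hrW x (Metric.thickening_subset_cthickening r K hx)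
      have hmono := Metric.thickening_mono (min_le_right δ 1) K
      rw [hF1 j x hj]
      exact ⟨hmono hx, hmono (h2 j _ hx)⟩
    · exact Or.inl (hF2 x hx)

/-- If no subcontinuum of `Z` maps onto `W`, then every map to `ℝ⁴` from a quotient of `Z` with
connected fibers is a uniform limit of maps without zeros. A rescaling makes the continuum in `ℝ⁴`
that maps onto `W` small; no continuum in the quotient is mapped onto it, as the preimage of such a
continuum in `Z` would be a subcontinuum mapping onto `W`. -/
lemma exists_nowhere_zero {Z X W : Type*} [TopologicalSpace Z] [CompactSpace Z]
    [TopologicalSpace X] [CompactSpace X] [T2Space X] [TopologicalSpace W] (hW : IsContinuum W)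
    (hno : ¬ ∃ Y : Set Z, IsSubcontinuum Y ∧ ∃ f : Y → W, Continuous f ∧ Function.Surjective f)
    (π : C(Z, X)) (hπ : ∀ y, IsConnected (π ⁻¹' {y})) (c : C(X, Fin 4 → ℝ)) {η : ℝ} (hη : 0 < η) :
    ∃ c' : C(X, Fin 4 → ℝ), (∀ y, ‖c y - c' y‖ ≤ η) ∧ ∀ y, c' y ≠ 0 := by
  obtain ⟨K, hKc, hK, φ, hφ, hφs⟩ := exists_continuum_map hW
  obtain ⟨R, hR, hKR⟩ := (hKc.isBounded.thickening (δ := 1)).subset_ball_lt 0 0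
  have hρ : 0 < η / (3 * R) := by positivity
  set ρ := η / (3 * R)
  have hπs : Function.Surjective π := fun y => (hπ y).nonempty
  obtain ⟨f', p, hp, hf'p, hf'⟩ := exists_omitting hKc hK (ρ⁻¹ • c) (by
    rintro ⟨C, hC, hCc, hCK⟩
    have hco : IsCoinducing π :=
      (π.continuous.isClosedMap.isQuotientMap π.continuous hπs).isCoinducing
    refine hno ⟨π ⁻¹' C, ⟨(hC.preimage π.continuous).isCompact,
      hco.isConnected_preimage_of_isClosed hπ hC hCc⟩,
      fun z => φ ⟨(ρ⁻¹ • c) (π z), hCK ▸ mem_image_of_mem _ z.2⟩, ?_, fun w => ?_⟩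
    · exact hφ.comp (Continuous.subtype_mk (by fun_prop) _)
    · obtain ⟨⟨k, hk⟩, rfl⟩ := hφs w
      rw [← hCK] at hk
      obtain ⟨y, hy, hyk⟩ := hk
      obtain ⟨z, rfl⟩ := hπs y
      exact ⟨⟨z, hy⟩, congrArg φ (Subtype.ext hyk)⟩)
  refine ⟨ρ • (f' - ContinuousMap.const X p), fun y => ?_, fun y hy => ?_⟩
  · have hpR : ‖p‖ < R := by
      simpa using hKR (Metric.self_subset_thickening one_pos K hp)
    have h2 : ‖ρ⁻¹ • c y - f' y‖ ≤ 2 * R := by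
      rcases hf' y with h | ⟨h, h'⟩
      · rw [h]
        simp only [ContinuousMap.smul_apply, sub_self, norm_zero]
        positivity
      · have h := hKR h
        have h' := hKR h'
        rw [mem_ball_zero_iff] at h h'
        refine (norm_sub_le _ _).trans ?_
        simp only [ContinuousMap.smul_apply] at h
        linarith
    have h3 : c y - (ρ • (f' - ContinuousMap.const X p)) y = ρ • (ρ⁻¹ • c y - f' y + p) := by
      simp only [ContinuousMap.smul_apply, ContinuousMap.sub_apply, ContinuousMap.const_apply]
      rw [smul_add, smul_sub ρ (ρ⁻¹ • c y), smul_inv_smul₀ hρ.ne', smul_sub]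
      abel
    rw [h3, norm_smul, Real.norm_of_nonneg hρ.le]
    calc ρ * ‖ρ⁻¹ • c y - f' y + p‖ ≤ ρ * (2 * R + R) := by
          gcongr
          exact (norm_add_le _ _).trans (add_le_add h2 hpR.le)
      _ = η := by simp only [ρ]; field_simp; norm_num
  · simp only [ContinuousMap.smul_apply, ContinuousMap.sub_apply, ContinuousMap.const_apply,
      smul_eq_zero, hρ.ne', false_or, sub_eq_zero] at hy
    exact hf'p y hy

/-! ### A function that is nonconstant on every member of a decomposition -/

/-- The function `v` is nonconstant on the fiber of `π` over `y`. -/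
def NonconstOn {Z X : Type*} (π : Z → X) (v : Z → ℝ) (y : X) : Prop :=
  ∃ a b, π a = y ∧ π b = y ∧ v a ≠ v b

/-- For a parametrized function, being nonconstant on a fiber is an open condition on the parameter
and the fiber. -/
lemma isOpen_nonconstOn {P Z X : Type*} [TopologicalSpace P] [TopologicalSpace Z]
    [TopologicalSpace X] {π : Z → X} (hπ : IsOpenMap π) {F : P → Z → ℝ}
    (hF : Continuous fun q : P × Z => F q.1 q.2) :
    IsOpen {q : P × X | NonconstOn π (F q.1) q.2} := by
  rw [isOpen_iff_mem_nhds]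
  rintro ⟨p, y⟩ ⟨a, b, rfl, hb, hab⟩
  simp only at hb hab
  obtain ⟨I, J, hI, hJ, haI, hbJ, hIJ⟩ := t2_separation hab
  obtain ⟨N, hN, A, hA, hNA⟩ := mem_nhds_prod_iff.mp
    (hF.continuousAt.preimage_mem_nhds (x := (p, a)) (hI.mem_nhds haI))
  obtain ⟨M, hM, B, hB, hMB⟩ := mem_nhds_prod_iff.mp
    (hF.continuousAt.preimage_mem_nhds (x := (p, b)) (hJ.mem_nhds hbJ))
  refine mem_nhds_prod_iff.mpr ⟨N ∩ M, Filter.inter_mem hN hM, π '' A ∩ π '' B,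
    Filter.inter_mem (hπ.image_mem_nhds hA) (hb ▸ hπ.image_mem_nhds hB), ?_⟩
  rintro ⟨p', y'⟩ ⟨⟨hpN, hpM⟩, ⟨a', ha', hay⟩, b', hb', hby⟩
  refine ⟨a', b', hay, hby, fun heq => ?_⟩
  have h1 : F p' a' ∈ I := hNA (mk_mem_prod hpN ha')
  have h2 : F p' b' ∈ J := hMB (mk_mem_prod hpM hb')
  rw [heq] at h1
  exact Set.disjoint_left.mp hIJ h1 h2

/-- On an infinite set of reals, a linear combination of the first four powers of the variable is
nonconstant unless its coefficients vanish. -/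
lemma eq_zero_of_sum_pow_const {s : Set ℝ} (hs : s.Infinite) {d : Fin 4 → ℝ} {e : ℝ}
    (h : ∀ x ∈ s, ∑ k, d k * x ^ ((k : ℕ) + 1) = e) : d = 0 := by
  set p : Polynomial ℝ := ∑ k, Polynomial.C (d k) * Polynomial.X ^ ((k : ℕ) + 1) - Polynomial.C e
  have hp : p = 0 := by
    refine Polynomial.eq_zero_of_infinite_isRoot p (hs.mono fun x hx => ?_)
    simp [p, Polynomial.IsRoot, Polynomial.eval_finsetSum, h x hx]
  funext k
  have := congrArg (fun q => Polynomial.coeff q ((k : ℕ) + 1)) hp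
  simpa [p, Polynomial.coeff_C_mul, Polynomial.coeff_X_pow, Polynomial.finsetSum_coeff,
    Polynomial.coeff_C, Fin.val_inj] using this

section decomposition
variable {Z X : Type*} [TopologicalSpace Z] [TopologicalSpace X] [CompactSpace X] [T2Space X]
  {π : C(Z, X)}

/-- Extending the set of fibers on which a function is nonconstant. Adding to `u` a combination of
powers of `g` with variable coefficients, a bad choice of the coefficients is unique on each fiber
over `D`, and one can stay away from the bad choices since these extend to a map `c` that can be
moved off zero. -/
lemma exists_nonconstOn_union (hπo : IsOpenMap π) (hπ : ∀ y, IsConnected (π ⁻¹' {y}))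
    (hmove : ∀ c : C(X, Fin 4 → ℝ), ∀ η : ℝ, 0 < η →
      ∃ c' : C(X, Fin 4 → ℝ), (∀ y, ‖c y - c' y‖ ≤ η) ∧ ∀ y, c' y ≠ 0)
    {P D : Set X} (hP : IsClosed P) (hD : IsClosed D) (u g : C(Z, ℝ))
    (hu : ∀ y ∈ P, NonconstOn π u y) (hg : ∀ y ∈ D, NonconstOn π g y) :
    ∃ u' : C(Z, ℝ), ∀ y ∈ P ∪ D, NonconstOn π u' y := by
  let v : (Fin 4 → ℝ) → Z → ℝ := fun c z => u z + ∑ k, c k * g z ^ ((k : ℕ) + 1)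
  have hv : Continuous fun q : (Fin 4 → ℝ) × Z => v q.1 q.2 := by fun_prop
  have hO := isOpen_nonconstOn hπo hv
  set O := {q : (Fin 4 → ℝ) × X | NonconstOn π (v q.1) q.2}
  -- the bad choices of coefficients of size at most one
  set S : Set (X × (Fin 4 → ℝ)) := (D ×ˢ Metric.closedBall 0 1) ∩ Prod.swap ⁻¹' Oᶜ
  have hS : IsCompact S :=
    (hD.isCompact.prod (isCompact_closedBall _ _)).inter_right
      (hO.isClosed_compl.preimage continuous_swap)
  have : CompactSpace S := isCompact_iff_compactSpace.mp hS
  have hinj : Function.Injective fun q : S => q.1.1 := by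
    rintro ⟨⟨y, c⟩, ⟨hy, -⟩, hc⟩ ⟨⟨y', c'⟩, -, hc'⟩ (rfl : y = y')
    have hc : ∀ a b, π a = y → π b = y → v c a = v c b := by
      intro a b ha hb
      by_contra h
      exact hc ⟨a, b, ha, hb, h⟩
    have hc' : ∀ a b, π a = y → π b = y → v c' a = v c' b := by
      intro a b ha hb
      by_contra h
      exact hc' ⟨a, b, ha, hb, h⟩
    obtain ⟨a, b, ha, hb, hab⟩ := hg y hy
    have hinf : (g '' (π ⁻¹' {y})).Infinite :=
      ((hπ y).isPreconnected.image g g.continuous.continuousOn).infinite_of_nontrivial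
        ⟨g a, mem_image_of_mem _ ha, g b, mem_image_of_mem _ hb, hab⟩
    have hzero : c - c' = 0 := by
      refine eq_zero_of_sum_pow_const hinf (e := v c a - v c' a) ?_
      rintro _ ⟨z, hz, rfl⟩
      rw [hc a z ha hz, hc' a z ha hz]
      simp only [v, Pi.sub_apply, sub_mul, Finset.sum_sub_distrib]
      ring
    have := sub_eq_zero.mp hzero
    subst this
    rfl
  have hemb : IsClosedEmbedding fun q : S => q.1.1 :=
    Continuous.isClosedEmbedding (by fun_prop) hinj
  obtain ⟨c, hc⟩ := ContinuousMap.exists_extension hemb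
    (⟨fun q : S => q.1.2, by fun_prop⟩ : C(S, Fin 4 → ℝ))
  have hcS : ∀ y d, (y, d) ∈ S → c y = d := fun y d h =>
    congrArg (fun F : C(S, Fin 4 → ℝ) => F ⟨(y, d), h⟩) hc
  obtain ⟨N, M, hN, -, hN0, hPM, hNM⟩ := generalized_tube_lemma
    (isCompact_singleton (x := (0 : Fin 4 → ℝ))) hP.isCompact hO (by
      rintro ⟨d, y⟩ ⟨hd, hy⟩
      obtain rfl : d = 0 := hd
      have : v 0 = u := by funext z; simp [v]
      change NonconstOn π (v 0) y
      rw [this]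
      exact hu y hy)
  obtain ⟨η, hη, hηN⟩ := Metric.nhds_basis_closedBall.mem_iff.mp
    (hN.mem_nhds (hN0 (mem_singleton _)))
  obtain ⟨c', hcc', hc'⟩ := hmove c (min η 1) (lt_min hη one_pos)
  let u' : C(Z, ℝ) := ⟨fun z => v ((c - c') (π z)) z, by
    exact hv.comp (((c - c').continuous.comp π.continuous).prodMk continuous_id)⟩
  have hu' : ∀ y, NonconstOn π (v ((c - c') y)) y → NonconstOn π u' y := by
    rintro y ⟨a, b, ha, hb, hab⟩
    refine ⟨a, b, ha, hb, ?_⟩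
    simpa only [u', ContinuousMap.coe_mk, ha, hb] using hab
  refine ⟨u', ?_⟩
  rintro y (hy | hy)
  · refine hu' y (hNM (mk_mem_prod (hηN ?_) (hPM hy)))
    rw [mem_closedBall_zero_iff]
    exact (hcc' y).trans (min_le_left _ _)
  · refine hu' y ?_
    by_contra hcon
    have := hcS y ((c - c') y) ⟨mk_mem_prod hy (by
      rw [mem_closedBall_zero_iff]
      exact (hcc' y).trans (min_le_right _ _)), hcon⟩
    rw [ContinuousMap.sub_apply, eq_comm, sub_eq_self] at this
    exact hc' y this

end decomposition

/-- Globalization of `exists_nonconstOn_union`: near a given fiber, the distance to one of its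
points serves as the function `g`. -/
lemma exists_nonconstOn {Z X : Type*} [MetricSpace Z] [TopologicalSpace X] [CompactSpace X]
    [T2Space X] {π : C(Z, X)} (hπo : IsOpenMap π) (hπ : ∀ y, IsConnected (π ⁻¹' {y}))
    (hπn : ∀ y, (π ⁻¹' {y}).Nontrivial)
    (hmove : ∀ c : C(X, Fin 4 → ℝ), ∀ η : ℝ, 0 < η →
      ∃ c' : C(X, Fin 4 → ℝ), (∀ y, ‖c y - c' y‖ ≤ η) ∧ ∀ y, c' y ≠ 0) :
    ∃ u : C(Z, ℝ), ∀ y, NonconstOn π u y := by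
  have key : ∀ P : Set X, IsClosed P → ∀ u : C(Z, ℝ), (∀ y ∈ P, NonconstOn π u y) →
      ∃ u' : C(Z, ℝ), ∀ y ∈ P ∪ closure univ, NonconstOn π u' y := by
    refine isCompact_univ.induction_on (p := fun s : Set X => ∀ P : Set X, IsClosed P →
      ∀ u : C(Z, ℝ), (∀ y ∈ P, NonconstOn π u y) →
      ∃ u' : C(Z, ℝ), ∀ y ∈ P ∪ closure s, NonconstOn π u' y) ?_ ?_ ?_ ?_
    · intro P _ u hu
      exact ⟨u, by simpa using hu⟩
    · intro s t hst ht P hP u hu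
      obtain ⟨u', hu'⟩ := ht P hP u hu
      exact ⟨u', fun y hy => hu' y (union_subset_union_right P (closure_mono hst) hy)⟩
    · intro s t hs ht P hP u hu
      obtain ⟨u', hu'⟩ := hs P hP u hu
      obtain ⟨u'', hu''⟩ := ht _ (hP.union isClosed_closure) u' hu'
      exact ⟨u'', by rwa [closure_union, ← union_assoc]⟩
    · intro y _
      obtain ⟨a, ha, b, hb, hab⟩ := hπn y
      let g : C(Z, ℝ) := ⟨dist a, by fun_prop⟩
      have hN : IsOpen {y | NonconstOn π g y} :=
        (isOpen_nonconstOn hπo (F := fun _ : Unit => g) (by fun_prop)).preimage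
          (Continuous.prodMk_right ())
      obtain ⟨t, ht, htc, htN⟩ := exists_mem_nhds_isClosed_subset
        (hN.mem_nhds ⟨a, b, ha, hb, by simpa [g] using hab⟩)
      refine ⟨t, mem_nhdsWithin_of_mem_nhds ht, fun P hP u hu => ?_⟩
      rw [htc.closure_eq]
      exact exists_nonconstOn_union hπo hπ hmove hP htc u g hu fun y hy => htN hy
  obtain ⟨u, hu⟩ := key ∅ isClosed_empty 0 (by simp)
  exact ⟨u, fun y => hu y (by simp)⟩

/-! ### From small components to covering dimension -/

/-- A compact metric space that is, for every `ε`, the union of two closed sets with components of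
size less than `ε` has covering dimension at most one. -/
lemma covDimLE_one {Z : Type*} [MetricSpace Z] [CompactSpace Z]
    (h : ∀ ε : ℝ, 0 < ε → ∃ A B : Set Z, IsClosed A ∧ IsClosed B ∧ A ∪ B = univ ∧
      (∀ x ∈ A, connectedComponentIn A x ⊆ Metric.ball x ε) ∧
      ∀ x ∈ B, connectedComponentIn B x ⊆ Metric.ball x ε) : CovDimLE Z 1 := by
  intro ι U _ hU hUc
  obtain ⟨ε, hε, hεU⟩ := lebesgue_number_lemma_of_metric isCompact_univ hU hUc.ge
  obtain ⟨A, B, hA, hB, hAB, hAε, hBε⟩ := h ε hε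
  have hsub : ∀ T : Set Z, (∀ x ∈ T, connectedComponentIn T x ⊆ Metric.ball x ε) →
      ∀ x ∈ T, ∃ i, connectedComponentIn T x ⊆ U i := fun T hT x hx => by
    obtain ⟨i, hi⟩ := hεU x (mem_univ x)
    exact ⟨i, (hT x hx).trans hi⟩
  obtain ⟨n, V, hVo, hVd, hAV, hVU⟩ := exists_disjoint_open_cover hA hU (hsub A hAε)
  obtain ⟨m, V', hVo', hVd', hBV, hVU'⟩ := exists_disjoint_open_cover hB hU (hsub B hBε)
  refine ⟨Fin n ⊕ Fin m, Sum.elim V V', inferInstance, ?_, ?_, ?_, fun x => ?_⟩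
  · rintro (j | j)
    exacts [hVo j, hVo' j]
  · rw [eq_univ_iff_forall]
    intro x
    rcases (hAB ▸ mem_univ x : x ∈ A ∪ B) with hx | hx
    · obtain ⟨j, hj⟩ := mem_iUnion.mp (hAV hx)
      exact mem_iUnion.mpr ⟨Sum.inl j, hj⟩
    · obtain ⟨j, hj⟩ := mem_iUnion.mp (hBV hx)
      exact mem_iUnion.mpr ⟨Sum.inr j, hj⟩
  · rintro (j | j)
    exacts [hVU j, hVU' j]
  · -- each of the two disjoint families has at most one member containing `x`
    have hinj : Function.Injective
        fun j : {j : Fin n ⊕ Fin m // x ∈ Sum.elim V V' j} => j.1.isLeft := by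
      rintro ⟨j | j, hj⟩ ⟨k | k, hk⟩ hjk
      · simp only [Subtype.mk.injEq, Sum.inl.injEq]
        by_contra hne
        exact Set.disjoint_left.mp (hVd hne) hj hk
      · simp at hjk
      · simp at hjk
      · simp only [Subtype.mk.injEq, Sum.inr.injEq]
        by_contra hne
        exact Set.disjoint_left.mp (hVd' hne) hj hk
    simpa using Nat.card_le_card_of_injective _ hinj

lemma isClosed_mem_nonemptyCompacts {Z : Type*} [TopologicalSpace Z] [T2Space Z] :
    IsClosed {q : Z × NonemptyCompacts Z | q.1 ∈ q.2} := by
  rw [← isOpen_compl_iff, isOpen_iff_mem_nhds]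
  rintro ⟨z, D⟩ hz
  obtain ⟨A, B, hA, hB, hzA, hDB, hAB⟩ := SeparatedNhds.of_isCompact_isCompact
    (isCompact_singleton (x := z)) D.isCompact (disjoint_singleton_left.mpr hz)
  refine mem_nhds_prod_iff.mpr ⟨A, hA.mem_nhds (hzA rfl), {D' | (D' : Set Z) ⊆ B},
    (NonemptyCompacts.isOpen_subsets_of_isOpen hB).mem_nhds hDB, ?_⟩
  rintro ⟨z', D'⟩ ⟨hz', hD'⟩ hmem
  exact Set.disjoint_left.mp hAB hz' (hD' hmem)

/-- The quotient map of a continuous decomposition of a compact space into closed sets. -/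
lemma exists_quotient_map {Z : Type*} [TopologicalSpace Z] [CompactSpace Z] [T2Space Z]
    {X : Set (NonemptyCompacts Z)} (hX : IsClosed X)
    (h : ∀ z, ∃ D ∈ X, z ∈ D ∧ ∀ D' ∈ X, z ∈ D' → D' = D) :
    ∃ π : C(Z, X), IsOpenMap π ∧ ∀ z y, π z = y ↔ z ∈ (y : NonemptyCompacts Z) := by
  choose p hpX hp hpu using h
  have : CompactSpace X := isCompact_iff_compactSpace.mp hX.isCompact
  have hiff : ∀ (z : Z) (y : X), (⟨p z, hpX z⟩ : X) = y ↔ z ∈ (y : NonemptyCompacts Z) := by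
    rintro z ⟨D, hD⟩
    simp only [Subtype.mk.injEq]
    exact ⟨fun h => h ▸ hp z, fun h => (hpu z D hD h).symm⟩
  refine ⟨⟨fun z => ⟨p z, hpX z⟩, ?_⟩, ?_, hiff⟩
  · refine continuous_iff_isClosed.mpr fun S hS => ?_
    have h1 : IsClosed ({q : Z × X | q.1 ∈ (q.2 : NonemptyCompacts Z)} ∩ Prod.snd ⁻¹' S) :=
      (isClosed_mem_nonemptyCompacts.preimage
        (continuous_fst.prodMk (continuous_subtype_val.comp continuous_snd))).inter
        (hS.preimage continuous_snd)
    convert isClosedMap_fst_of_compactSpace _ h1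
    ext z
    simp only [mem_preimage, mem_image, mem_inter_iff, Prod.exists, exists_and_right,
      exists_eq_right]
    constructor
    · exact fun hz => ⟨⟨p z, hpX z⟩, hp z, hz⟩
    · rintro ⟨y, hzy, hy⟩
      rwa [(hiff z y).mpr hzy]
  · intro O hO
    convert (NonemptyCompacts.isOpen_inter_nonempty_of_isOpen hO).preimage
      (continuous_subtype_val (p := (· ∈ X)))
    ext y
    constructor
    · rintro ⟨z, hz, hzy⟩
      exact ⟨z, (hiff z y).mp hzy, hz⟩
    · rintro ⟨z, hzy, hz⟩
      exact ⟨z, hz, (hiff z y).mpr hzy⟩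

theorem stmt_15 {W Z : Type u} [TopologicalSpace W] [TopologicalSpace Z]
    (hW : IsContinuum W) (hZ : IsContinuum Z)
    (hZHI : HereditarilyIndecomposable Z) (hdim : ¬ CovDimLE Z 1) :
    ∃ Y : Set Z, IsSubcontinuum Y ∧
      ∃ f : ↥Y → W, Continuous f ∧ Function.Surjective f := by
  by_contra hno
  obtain ⟨hne, hcomp, hconn, hmet⟩ := hZ
  let _ := metrizableSpaceMetric Z
  refine hdim (covDimLE_one fun ε hε => ?_)
  rcases subsingleton_or_nontrivial Z with hs | hs
  · have hball : ∀ (x : Z) (s : Set Z), s ⊆ Metric.ball x ε := fun x s y _ => by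
      rw [Subsingleton.elim y x]; exact Metric.mem_ball_self hε
    exact ⟨univ, univ, isClosed_univ, isClosed_univ, union_self _, fun x _ => hball x _,
      fun x _ => hball x _⟩
  obtain ⟨X, hX, hXc, hXn, hXε, hXu⟩ := exists_decomposition hZHI hε
  obtain ⟨π, hπo, hπ⟩ := exists_quotient_map hX hXu
  have : CompactSpace X := isCompact_iff_compactSpace.mp hX.isCompact
  have hfib : ∀ y : X, π ⁻¹' {y} = (y : NonemptyCompacts Z) := fun y => by
    ext z; exact hπ z y
  have hπc : ∀ y : X, IsConnected (π ⁻¹' {y}) := fun y => by rw [hfib]; exact hXc y y.2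
  obtain ⟨u, hu⟩ := exists_nonconstOn hπo hπc (fun y => by rw [hfib]; exact hXn y y.2)
    fun c η hη => exists_nowhere_zero hW hno π hπc c hη
  have hself : ∀ z, z ∈ (π z : NonemptyCompacts Z) := fun z => (hπ z _).mp rfl
  have hp : Continuous fun z => (π z : NonemptyCompacts Z) :=
    continuous_subtype_val.comp π.continuous
  have hmid : Continuous fun z => hi u (π z : NonemptyCompacts Z) - hi (-u) (π z) :=
    ((continuous_hi u.continuous).comp hp).sub ((continuous_hi (-u).continuous).comp hp)
  have hu2 : Continuous fun z => 2 * u z := by fun_prop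
  -- on each member, `u` takes values strictly above and strictly below the middle of its range
  have hlt : ∀ y : X, 0 < hi u (y : NonemptyCompacts Z) + hi (-u) y := by
    intro y
    obtain ⟨a, b, ha, hb, hab⟩ := hu y
    have ha := (hπ a y).mp ha
    have hb := (hπ b y).mp hb
    have h1 := le_hi u.continuous ha
    have h2 := le_hi u.continuous hb
    have h3 := le_hi (-u).continuous ha
    have h4 := le_hi (-u).continuous hb
    simp only [ContinuousMap.neg_apply] at h3 h4
    rcases lt_or_gt_of_ne hab with h | h <;> linarith
  -- a closed set containing no member of the decomposition has small components
  have hsmall : ∀ T : Set Z, IsClosed T → (∀ y : X, ¬ ((y : NonemptyCompacts Z) : Set Z) ⊆ T) →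
      ∀ x ∈ T, connectedComponentIn T x ⊆ Metric.ball x ε := by
    intro T hT hTX x hx
    rcases hZHI.nested
      ⟨(isClosed_connectedComponentIn hT x).isCompact, isConnected_connectedComponentIn_iff.mpr hx⟩
      ⟨(π x : NonemptyCompacts Z).isCompact, hXc _ (π x).2⟩
      ⟨x, mem_connectedComponentIn hx, hself x⟩ with h | h
    · exact fun z hz => hXε _ (π x).2 z (h hz) x (hself x)
    · exact absurd (h.trans (connectedComponentIn_subset T x)) (hTX (π x))
  have hA : IsClosed {z | 2 * u z ≤ hi u (π z : NonemptyCompacts Z) - hi (-u) (π z)} :=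
    isClosed_le hu2 hmid
  have hB : IsClosed {z | hi u (π z : NonemptyCompacts Z) - hi (-u) (π z) ≤ 2 * u z} :=
    isClosed_le hmid hu2
  refine ⟨_, _, hA, hB, eq_univ_of_forall fun z =>
    le_total (2 * u z) (hi u (π z : NonemptyCompacts Z) - hi (-u) (π z)), hsmall _ hA fun y hy => ?_,
    hsmall _ hB fun y hy => ?_⟩
  · obtain ⟨z, hz, hzu⟩ := exists_eq_hi u.continuous (y : NonemptyCompacts Z)
    have h := hy hz
    simp only [mem_ofPred_eq, (hπ z y).mpr hz, hzu] at h
    linarith [hlt y]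
  · obtain ⟨z, hz, hzu⟩ := exists_eq_hi (-u).continuous (y : NonemptyCompacts Z)
    have h := hy hz
    simp only [mem_ofPred_eq, (hπ z y).mpr hz] at h
    simp only [ContinuousMap.neg_apply] at hzu
    linarith [hlt y]
end
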